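/- For each k ∈ {1, 2, 3} there exists a constant C > 0, independent of α and φ, such that the following holds: for every α > 0 and every (b-a)-periodic function φ : ℝ → ℝ of class C^{k+1}, the partial sum P_k^R[φ], defined by P_k^R[φ](x) = α·Σ_{p=1}^{k} D_R^p[φ](x) for k = 1, 2, and by P_3^R[φ](x) = α·Σ_{p=1}^{3} D_R^p[φ](x) - α·D_0[D_R^2[φ]](x) for k = 3, satisfies sup_{x ∈ [a,b]} |φ'(x) - P_k^R[φ](x)| ≤ C·(1/α)^k·sup_{x ∈ ℝ} |φ^{(k+1)}(x)|. -/

import Mathlib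

/-!
Let `S v` be the periodic solution `u` of `u + u'/α = v` and `W v` that of `w - w''/α² = v`. Then
`D_R v = v - S v` and `D_0 v = v - W v` on `[a,b]`. Integration by parts shows that
`D_R v = (1/α) S v'` for a `C¹` function with `v a = v b`, that `S` commutes with differentiation
on such functions, and that `D_0 v = -(1/α²) W v''` when also `v' a = v' b`. Consequently
`D_R^p φ = (1/α)^p S^p φ^{(p)}`, and telescoping gives

* `φ' - α ∑_{p ≤ k} D_R^p φ = (1/α)^k S^k φ^{(k+1)}`,
* `φ' - P_3 φ = (1/α)^3 (S³ φ'''' - W S² φ'''')`.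

Both `S` and `W` are monotone on `[a,b]` and fix constants, so they do not increase sup bounds
there. The first error is thus at most `(1/α)^k M` and the second at most
`2 (1/α)^3 M`, where `M` bounds `|φ^{(k+1)}|`, so `C = 2` serves for all three `k`. Periodicity of `φ` enters only
through the equality of the values of its derivatives at `a` and `b`.
-/

open Real MeasureTheory

/-- The convolution integral `I_R[v](x) = α·∫_a^x exp(-α(x-s)) v(s) ds`. -/
noncomputable def IR (α a b : ℝ) (v : ℝ → ℝ) (x : ℝ) : ℝ :=
  α * ∫ s in a..x, Real.exp (-α * (x - s)) * v s

/-- The convolution integral `I_0[v](x) = (α/2)·∫_a^b exp(-α|x-s|) v(s) ds`. -/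
noncomputable def I0 (α a b : ℝ) (v : ℝ → ℝ) (x : ℝ) : ℝ :=
  (α / 2) * ∫ s in a..b, Real.exp (-α * |x - s|) * v s

/-- The periodic operator `D_R`. -/
noncomputable def DR (α a b : ℝ) (v : ℝ → ℝ) : ℝ → ℝ := fun x =>
  v x - IR α a b v x -
    (IR α a b v b / (1 - Real.exp (-α * (b - a)))) * Real.exp (-α * (x - a))

/-- The periodic operator `D_0`. -/
noncomputable def D0 (α a b : ℝ) (v : ℝ → ℝ) : ℝ → ℝ := fun x =>
  v x - I0 α a b v x -
    (I0 α a b v b / (1 - Real.exp (-α * (b - a)))) * Real.exp (-α * (x - a)) -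
    (I0 α a b v a / (1 - Real.exp (-α * (b - a)))) * Real.exp (-α * (b - x))

/-- The right-sided partial sum `P_k^R[φ]`: for `k = 1, 2` it is
`α·Σ_{p=1}^k D_R^p[φ]`, and for `k = 3` it is
`α·Σ_{p=1}^3 D_R^p[φ] - α·D_0[D_R^2[φ]]`. -/
noncomputable def PR (k : ℕ) (α a b : ℝ) (φ : ℝ → ℝ) (x : ℝ) : ℝ :=
  if k = 3 then
    α * (∑ p ∈ Finset.Icc 1 3, (DR α a b)^[p] φ x) - α * D0 α a b ((DR α a b)^[2] φ) x
  else
    α * ∑ p ∈ Finset.Icc 1 k, (DR α a b)^[p] φ x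

/-- The periodic solution operator of `u + u'/α = v`, so that `D_R v = v - S v`. -/
noncomputable def SR (α a b : ℝ) (v : ℝ → ℝ) : ℝ → ℝ := fun x =>
  IR α a b v x +
    (IR α a b v b / (1 - Real.exp (-α * (b - a)))) * Real.exp (-α * (x - a))

/-- On `[a,b]`, the periodic solution operator of `w - w''/α² = v`, so that `D_0 v = v - W v`. -/
noncomputable def W0 (α a b : ℝ) (v : ℝ → ℝ) : ℝ → ℝ := fun x =>
  I0 α a b v x +
    (I0 α a b v b / (1 - Real.exp (-α * (b - a)))) * Real.exp (-α * (x - a)) +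
    (I0 α a b v a / (1 - Real.exp (-α * (b - a)))) * Real.exp (-α * (b - x))

/-- `f` is of class `C¹` with derivative `f'`, and takes the same value at `a` and `b`. -/
structure PerDeriv (a b : ℝ) (f f' : ℝ → ℝ) : Prop where
  hasDeriv : ∀ x, HasDerivAt f (f' x) x
  cont : Continuous f'
  per : f a = f b

lemma PerDeriv.continuous {a b : ℝ} {f f' : ℝ → ℝ} (h : PerDeriv a b f f') : Continuous f :=
  continuous_iff_continuousAt.2 fun x => (h.hasDeriv x).continuousAt

lemma one_sub_exp_pos {α a b : ℝ} (hα : 0 < α) (hab : a < b) :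
    0 < 1 - Real.exp (-α * (b - a)) := by
  have : Real.exp (-α * (b - a)) < 1 := Real.exp_lt_one_iff.2 (by nlinarith)
  linarith

lemma DR_eq (α a b : ℝ) (v : ℝ → ℝ) (x : ℝ) : DR α a b v x = v x - SR α a b v x := by
  simp only [DR, SR]; ring

lemma D0_eq (α a b : ℝ) (v : ℝ → ℝ) (x : ℝ) : D0 α a b v x = v x - W0 α a b v x := by
  simp only [D0, W0]; ring

/-! ### Linearity -/

lemma IR_smul (α a b c : ℝ) (v : ℝ → ℝ) (x : ℝ) :
    IR α a b (fun s => c * v s) x = c * IR α a b v x := by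
  simp only [IR, mul_left_comm _ c, intervalIntegral.integral_const_mul]

lemma SR_smul (α a b c : ℝ) (v : ℝ → ℝ) (x : ℝ) :
    SR α a b (fun s => c * v s) x = c * SR α a b v x := by
  simp only [SR, IR_smul]; ring

lemma IR_sub (α a b : ℝ) {v w : ℝ → ℝ} (hv : Continuous v) (hw : Continuous w) (x : ℝ) :
    IR α a b (fun s => v s - w s) x = IR α a b v x - IR α a b w x := by
  simp only [IR, mul_sub (Real.exp _)]
  rw [intervalIntegral.integral_sub, mul_sub] <;>
    exact Continuous.intervalIntegrable (by fun_prop) _ _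

lemma SR_sub (α a b : ℝ) {v w : ℝ → ℝ} (hv : Continuous v) (hw : Continuous w) (x : ℝ) :
    SR α a b (fun s => v s - w s) x = SR α a b v x - SR α a b w x := by
  simp only [SR, IR_sub α a b hv hw]; ring

lemma I0_smul (α a b c : ℝ) (v : ℝ → ℝ) (x : ℝ) :
    I0 α a b (fun s => c * v s) x = c * I0 α a b v x := by
  simp only [I0, mul_left_comm _ c, intervalIntegral.integral_const_mul]

lemma W0_smul (α a b c : ℝ) (v : ℝ → ℝ) (x : ℝ) :
    W0 α a b (fun s => c * v s) x = c * W0 α a b v x := by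
  simp only [W0, I0_smul]; ring

lemma I0_sub (α a b : ℝ) {v w : ℝ → ℝ} (hv : Continuous v) (hw : Continuous w) (x : ℝ) :
    I0 α a b (fun s => v s - w s) x = I0 α a b v x - I0 α a b w x := by
  simp only [I0, mul_sub (Real.exp _)]
  rw [intervalIntegral.integral_sub, mul_sub] <;>
    exact Continuous.intervalIntegrable (by fun_prop) _ _

lemma W0_sub (α a b : ℝ) {v w : ℝ → ℝ} (hv : Continuous v) (hw : Continuous w) (x : ℝ) :
    W0 α a b (fun s => v s - w s) x = W0 α a b v x - W0 α a b w x := by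
  simp only [W0, I0_sub α a b hv hw]; ring

/-! ### The operator `S` -/

/-- `S v` solves `u' = α (v - u)`. -/
lemma SR_hasDerivAt (α a b : ℝ) {v : ℝ → ℝ} (hv : Continuous v) (x : ℝ) :
    HasDerivAt (SR α a b v) (α * (v x - SR α a b v x)) x := by
  have hI : ∀ y, IR α a b v y
      = α * (Real.exp (-α * y) * ∫ s in a..y, Real.exp (α * s) * v s) := by
    intro y
    rw [IR, ← intervalIntegral.integral_const_mul (Real.exp (-α * y))]
    refine congrArg (α * ·) (intervalIntegral.integral_congr fun s _ => ?_)
    rw [← mul_assoc, ← Real.exp_add]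
    ring_nf
  have hc : Continuous fun s => Real.exp (α * s) * v s := by fun_prop
  have h1 : HasDerivAt (fun y => ∫ s in a..y, Real.exp (α * s) * v s)
      (Real.exp (α * x) * v x) x :=
    intervalIntegral.integral_hasDerivAt_right (hc.intervalIntegrable _ _)
      (hc.stronglyMeasurableAtFilter _ _) hc.continuousAt
  have h2 : HasDerivAt (fun y => Real.exp (-α * y)) (Real.exp (-α * x) * -α) x := by
    simpa using ((hasDerivAt_id x).const_mul (-α)).exp
  have h3 : HasDerivAt (fun y => Real.exp (-α * (y - a)))
      (Real.exp (-α * (x - a)) * -α) x := by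
    simpa using (((hasDerivAt_id x).sub_const a).const_mul (-α)).exp
  have he : Real.exp (-α * x) * Real.exp (α * x) = 1 := by
    rw [← Real.exp_add]; simp
  have key := ((h2.mul h1).const_mul α).add
    (h3.const_mul (IR α a b v b / (1 - Real.exp (-α * (b - a)))))
  have hS : SR α a b v = fun y =>
      α * (Real.exp (-α * y) * ∫ s in a..y, Real.exp (α * s) * v s) +
      (IR α a b v b / (1 - Real.exp (-α * (b - a)))) * Real.exp (-α * (y - a)) := by
    ext y; rw [SR, hI y]
  have hval : α * (v x - SR α a b v x) =
      α * (Real.exp (-α * x) * -α * (∫ s in a..x, Real.exp (α * s) * v s) +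
        Real.exp (-α * x) * (Real.exp (α * x) * v x)) +
      (IR α a b v b / (1 - Real.exp (-α * (b - a)))) * (Real.exp (-α * (x - a)) * -α) := by
    rw [SR, hI x]
    linear_combination (-α * v x) * he
  rw [hval, hS]
  exact key

lemma SR_continuous (α a b : ℝ) {v : ℝ → ℝ} (hv : Continuous v) : Continuous (SR α a b v) :=
  continuous_iff_continuousAt.2 fun x => (SR_hasDerivAt α a b hv x).continuousAt

lemma SR_per {α a b : ℝ} (hα : 0 < α) (hab : a < b) (v : ℝ → ℝ) :
    SR α a b v a = SR α a b v b := by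
  have h := (one_sub_exp_pos hα hab).ne'
  have h0 : IR α a b v a = 0 := by simp [IR]
  simp only [SR, h0, sub_self, mul_zero, Real.exp_zero]
  generalize Real.exp (-α * (b - a)) = μ at h ⊢
  field_simp
  ring

/-- Integration by parts: `S v' = α (v - S v)` when `v a = v b`. -/
lemma SR_deriv {α a b : ℝ} (hα : 0 < α) (hab : a < b) {v v' : ℝ → ℝ}
    (h : PerDeriv a b v v') (x : ℝ) : SR α a b v' x = α * (v x - SR α a b v x) := by
  have hμ := (one_sub_exp_pos hα hab).ne'
  have hc := h.cont
  have hcv := h.continuous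
  have hI : ∀ y, IR α a b v' y =
      α * (v y - Real.exp (-α * (y - a)) * v a) - α * IR α a b v y := by
    intro y
    have hd : ∀ s ∈ Set.uIcc a y, HasDerivAt (fun s => Real.exp (-α * (y - s)) * v s)
        (Real.exp (-α * (y - s)) * v' s + α * (Real.exp (-α * (y - s)) * v s)) s := by
      intro s _
      have h1 : HasDerivAt (fun s => Real.exp (-α * (y - s)))
          (Real.exp (-α * (y - s)) * α) s := by
        simpa using (((hasDerivAt_id s).const_sub y).const_mul (-α)).exp
      refine (h1.mul (h.hasDeriv s)).congr_deriv ?_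
      ring
    have hF := intervalIntegral.integral_eq_sub_of_hasDerivAt hd
      (Continuous.intervalIntegrable (by fun_prop) _ _)
    rw [intervalIntegral.integral_add (Continuous.intervalIntegrable (by fun_prop) _ _)
      (Continuous.intervalIntegrable (by fun_prop) _ _),
      intervalIntegral.integral_const_mul] at hF
    simp only [sub_self, mul_zero, Real.exp_zero, one_mul] at hF
    simp only [IR]
    linear_combination α * hF
  simp only [SR, hI, h.per]
  generalize Real.exp (-α * (b - a)) = μ at hμ ⊢
  field_simp
  ring

lemma DR_of_perDeriv {α a b : ℝ} (hα : 0 < α) (hab : a < b) {v v' : ℝ → ℝ}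
    (h : PerDeriv a b v v') : DR α a b v = fun x => 1 / α * SR α a b v' x := by
  ext x
  rw [DR_eq, SR_deriv hα hab h]
  field_simp

/-- `S` commutes with differentiation. -/
lemma PerDeriv.SR {α a b : ℝ} (hα : 0 < α) (hab : a < b) {v v' : ℝ → ℝ}
    (h : PerDeriv a b v v') : PerDeriv a b (SR α a b v) (SR α a b v') where
  hasDeriv x := by
    rw [SR_deriv hα hab h]
    exact SR_hasDerivAt α a b h.continuous x
  cont := SR_continuous α a b h.cont
  per := SR_per hα hab v

lemma PerDeriv.smul {a b : ℝ} {v v' : ℝ → ℝ} (h : PerDeriv a b v v') (c : ℝ) :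
    PerDeriv a b (fun x => c * v x) (fun x => c * v' x) where
  hasDeriv x := (h.hasDeriv x).const_mul c
  cont := h.cont.const_mul c
  per := by simp only [h.per]

lemma perDeriv_const (a b M : ℝ) : PerDeriv a b (fun _ => M) (fun _ => 0) where
  hasDeriv x := hasDerivAt_const x M
  cont := continuous_const
  per := rfl

lemma SR_const {α a b : ℝ} (hα : 0 < α) (hab : a < b) (M x : ℝ) :
    SR α a b (fun _ => M) x = M := by
  have h := SR_deriv hα hab (perDeriv_const a b M) x
  have h0 : SR α a b (fun _ => 0) x = 0 := by simp [_root_.SR, IR]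
  rw [h0] at h
  have := (mul_eq_zero.1 h.symm).resolve_left hα.ne'
  linarith

lemma SR_nonneg {α a b : ℝ} (hα : 0 < α) (hab : a < b) {v : ℝ → ℝ}
    (h : ∀ x ∈ Set.Icc a b, 0 ≤ v x) : ∀ x ∈ Set.Icc a b, 0 ≤ SR α a b v x := by
  have hI : ∀ x ∈ Set.Icc a b, 0 ≤ IR α a b v x := by
    intro x hx
    refine mul_nonneg hα.le (intervalIntegral.integral_nonneg hx.1 fun s hs => ?_)
    exact mul_nonneg (Real.exp_pos _).le (h s ⟨hs.1, hs.2.trans hx.2⟩)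
  intro x hx
  have h1 := one_sub_exp_pos hα hab
  have h2 := hI x hx
  have h3 := hI b ⟨hab.le, le_rfl⟩
  unfold _root_.SR
  positivity

lemma SR_bound {α a b : ℝ} (hα : 0 < α) (hab : a < b) {v : ℝ → ℝ} (hv : Continuous v) {M : ℝ}
    (h : ∀ x ∈ Set.Icc a b, |v x| ≤ M) : ∀ x ∈ Set.Icc a b, |SR α a b v x| ≤ M := by
  intro x hx
  have h1 := SR_nonneg hα hab (v := fun s => M - v s)
    (fun s hs => by linarith [(abs_le.1 (h s hs)).2]) x hx
  have h2 := SR_nonneg hα hab (v := fun s => v s - (-M))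
    (fun s hs => by linarith [(abs_le.1 (h s hs)).1]) x hx
  rw [SR_sub α a b continuous_const hv, SR_const hα hab] at h1
  rw [SR_sub α a b hv continuous_const, SR_const hα hab] at h2
  exact abs_le.2 ⟨by linarith, by linarith⟩

/-! ### The operator `W` -/

/-- Two integrations by parts: `W v'' = α² (W v - v)` when `v` and `v'` match at `a` and `b`. -/
lemma W0_deriv {α a b : ℝ} (hα : 0 < α) (hab : a < b) {v v' v'' : ℝ → ℝ}
    (h : PerDeriv a b v v') (h' : PerDeriv a b v' v'') {x : ℝ} (hx : x ∈ Set.Icc a b) :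
    W0 α a b v'' x = α ^ 2 * (W0 α a b v x - v x) := by
  have hμ := (one_sub_exp_pos hα hab).ne'
  have hc := h'.cont
  have hcv' := h.cont
  have hcv := h.continuous
  have hI : ∀ y ∈ Set.Icc a b, I0 α a b (fun s => v'' s - α ^ 2 * v s) y =
      α / 2 * (-2 * α * v y - Real.exp (-α * (y - a)) * (v' a - α * v a)
        + Real.exp (-α * (b - y)) * (v' a + α * v a)) := by
    intro y hy
    have hd1 : ∀ s ∈ Set.uIcc a y, HasDerivAt
        (fun s => Real.exp (-α * (y - s)) * (v' s - α * v s))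
        (Real.exp (-α * (y - s)) * (v'' s - α ^ 2 * v s)) s := by
      intro s _
      have h1 : HasDerivAt (fun s => Real.exp (-α * (y - s)))
          (Real.exp (-α * (y - s)) * α) s := by
        simpa using (((hasDerivAt_id s).const_sub y).const_mul (-α)).exp
      refine (h1.mul ((h'.hasDeriv s).sub ((h.hasDeriv s).const_mul α))).congr_deriv ?_
      simp only [Pi.sub_apply]
      ring
    have hd2 : ∀ s ∈ Set.uIcc y b, HasDerivAt
        (fun s => Real.exp (-α * (s - y)) * (v' s + α * v s))
        (Real.exp (-α * (s - y)) * (v'' s - α ^ 2 * v s)) s := by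
      intro s _
      have h1 : HasDerivAt (fun s => Real.exp (-α * (s - y)))
          (Real.exp (-α * (s - y)) * -α) s := by
        simpa using (((hasDerivAt_id s).sub_const y).const_mul (-α)).exp
      refine (h1.mul ((h'.hasDeriv s).add ((h.hasDeriv s).const_mul α))).congr_deriv ?_
      simp only [Pi.add_apply]
      ring
    have hF1 := intervalIntegral.integral_eq_sub_of_hasDerivAt hd1
      (Continuous.intervalIntegrable (by fun_prop) _ _)
    have hF2 := intervalIntegral.integral_eq_sub_of_hasDerivAt hd2
      (Continuous.intervalIntegrable (by fun_prop) _ _)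
    have e1 : ∫ s in a..y, Real.exp (-α * |y - s|) * (v'' s - α ^ 2 * v s) =
        ∫ s in a..y, Real.exp (-α * (y - s)) * (v'' s - α ^ 2 * v s) := by
      refine intervalIntegral.integral_congr fun s hs => ?_
      rw [Set.uIcc_of_le hy.1] at hs
      simp only [abs_of_nonneg (sub_nonneg.2 hs.2)]
    have e2 : ∫ s in y..b, Real.exp (-α * |y - s|) * (v'' s - α ^ 2 * v s) =
        ∫ s in y..b, Real.exp (-α * (s - y)) * (v'' s - α ^ 2 * v s) := by
      refine intervalIntegral.integral_congr fun s hs => ?_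
      rw [Set.uIcc_of_le hy.2] at hs
      simp only [abs_sub_comm y s, abs_of_nonneg (sub_nonneg.2 hs.1)]
    have hsplit := intervalIntegral.integral_add_adjacent_intervals (μ := volume)
      (f := fun s => Real.exp (-α * |y - s|) * (v'' s - α ^ 2 * v s)) (a := a) (b := y) (c := b)
      (Continuous.intervalIntegrable (by fun_prop) _ _)
      (Continuous.intervalIntegrable (by fun_prop) _ _)
    rw [I0, ← hsplit, e1, e2, hF1, hF2, ← h.per, ← h'.per]
    simp only [sub_self, mul_zero, Real.exp_zero]
    ring
  have hW : W0 α a b (fun s => v'' s - α ^ 2 * v s) x = -α ^ 2 * v x := by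
    simp only [W0]
    rw [hI x hx, hI a ⟨le_rfl, hab.le⟩, hI b ⟨hab.le, le_rfl⟩, ← h.per]
    simp only [sub_self, mul_zero, Real.exp_zero]
    generalize Real.exp (-α * (b - a)) = μ at hμ ⊢
    field_simp
    ring
  rw [W0_sub α a b hc (by fun_prop), W0_smul] at hW
  linear_combination hW

lemma W0_const {α a b : ℝ} (hα : 0 < α) (hab : a < b) (M : ℝ) {x : ℝ} (hx : x ∈ Set.Icc a b) :
    W0 α a b (fun _ => M) x = M := by
  have h := W0_deriv hα hab (perDeriv_const a b M) (perDeriv_const a b 0) hx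
  have h0 : W0 α a b (fun _ => 0) x = 0 := by simp [W0, I0]
  rw [h0] at h
  have := (mul_eq_zero.1 h.symm).resolve_left (by positivity)
  linarith

lemma W0_nonneg {α a b : ℝ} (hα : 0 < α) (hab : a < b) {v : ℝ → ℝ}
    (h : ∀ x ∈ Set.Icc a b, 0 ≤ v x) (x : ℝ) : 0 ≤ W0 α a b v x := by
  have hI : ∀ x, 0 ≤ I0 α a b v x := by
    intro x
    refine mul_nonneg (by positivity) (intervalIntegral.integral_nonneg hab.le fun s hs => ?_)
    exact mul_nonneg (Real.exp_pos _).le (h s hs)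
  have h1 := one_sub_exp_pos hα hab
  have h2 := hI x
  have h3 := hI b
  have h4 := hI a
  unfold W0
  positivity

lemma W0_bound {α a b : ℝ} (hα : 0 < α) (hab : a < b) {v : ℝ → ℝ} (hv : Continuous v) {M : ℝ}
    (h : ∀ x ∈ Set.Icc a b, |v x| ≤ M) : ∀ x ∈ Set.Icc a b, |W0 α a b v x| ≤ M := by
  intro x hx
  have h1 := W0_nonneg hα hab (v := fun s => M - v s)
    (fun s hs => by linarith [(abs_le.1 (h s hs)).2]) x
  have h2 := W0_nonneg hα hab (v := fun s => v s - (-M))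
    (fun s hs => by linarith [(abs_le.1 (h s hs)).1]) x
  rw [W0_sub α a b continuous_const hv, W0_const hα hab _ hx] at h1
  rw [W0_sub α a b hv continuous_const, W0_const hα hab _ hx] at h2
  exact abs_le.2 ⟨by linarith, by linarith⟩

/-! ### The error identity and the estimate -/

lemma perDeriv_iteratedDeriv {a b : ℝ} {φ : ℝ → ℝ} (hper : Function.Periodic φ (b - a)) {n j : ℕ}
    (hφ : ContDiff ℝ n φ) (hj : j < n) :
    PerDeriv a b (iteratedDeriv j φ) (iteratedDeriv (j + 1) φ) where
  hasDeriv x := by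
    rw [iteratedDeriv_succ]
    exact (hφ.differentiable_iteratedDeriv j (by exact_mod_cast hj) x).hasDerivAt
  cont := hφ.continuous_iteratedDeriv (j + 1) (by exact_mod_cast hj)
  per := by
    have h := congrFun (iteratedDeriv_comp_add_const j φ (b - a)) a
    have h2 : (fun z => φ (z + (b - a))) = φ := funext hper
    rw [h2] at h
    simpa using h

lemma SR_iterate_perDeriv {α a b : ℝ} (hα : 0 < α) (hab : a < b) {f f' : ℝ → ℝ}
    (hf : PerDeriv a b f f') (p : ℕ) :
    PerDeriv a b ((SR α a b)^[p] f) ((SR α a b)^[p] f') := by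
  induction p with
  | zero => exact hf
  | succ p ih =>
    simp only [Function.iterate_succ_apply']
    exact ih.SR hα hab

/-- `D_R^p φ = (1/α)^p S^p φ^{(p)}`. -/
lemma DR_iterate {α a b : ℝ} (hα : 0 < α) (hab : a < b) {n : ℕ} {f : ℕ → ℝ → ℝ}
    (hf : ∀ j < n, PerDeriv a b (f j) (f (j + 1))) (p : ℕ) (hp : p ≤ n) :
    (DR α a b)^[p] (f 0) = fun x => (1 / α) ^ p * (SR α a b)^[p] (f p) x := by
  induction p with
  | zero => simp
  | succ p ih =>
    rw [Function.iterate_succ_apply', ih (by omega),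
      DR_of_perDeriv hα hab ((SR_iterate_perDeriv hα hab (hf p (by omega)) p).smul _)]
    ext x
    rw [SR_smul, Function.iterate_succ_apply']
    ring

lemma SR_iterate_bound {α a b : ℝ} (hα : 0 < α) (hab : a < b) {v : ℝ → ℝ} (hv : Continuous v)
    {M : ℝ} (h : ∀ x ∈ Set.Icc a b, |v x| ≤ M) (p : ℕ) :
    Continuous ((SR α a b)^[p] v) ∧ ∀ x ∈ Set.Icc a b, |(SR α a b)^[p] v x| ≤ M := by
  induction p with
  | zero => exact ⟨hv, h⟩
  | succ p ih =>
    simp only [Function.iterate_succ_apply']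
    exact ⟨SR_continuous α a b ih.1, SR_bound hα hab ih.1 ih.2⟩

/-- `φ' - α ∑_{p ≤ k} D_R^p φ = (1/α)^k S^k φ^{(k+1)}`. -/
lemma error_identity {α a b : ℝ} (hα : 0 < α) (hab : a < b) {n : ℕ} {f : ℕ → ℝ → ℝ}
    (hf : ∀ j < n, PerDeriv a b (f j) (f (j + 1))) (x : ℝ) (k : ℕ) (hk : k < n) :
    f 1 x - α * ∑ p ∈ Finset.Icc 1 k, (DR α a b)^[p] (f 0) x =
      (1 / α) ^ k * (SR α a b)^[k] (f (k + 1)) x := by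
  induction k with
  | zero => simp
  | succ k ih =>
    have h1 := ih (by omega)
    have h2 := SR_deriv hα hab (SR_iterate_perDeriv hα hab (hf (k + 1) hk) k) x
    rw [Finset.sum_Icc_succ_top (by omega), DR_iterate hα hab hf (k + 1) hk.le]
    simp only [Function.iterate_succ_apply'] at h2 ⊢
    rw [mul_add, ← sub_sub, h1, h2, pow_succ]
    field_simp

/-- Error estimate for the right-sided periodic partial sums: for `k ∈ {1,2,3}` there is a
constant `C > 0`, independent of `α` and `φ`, with
`sup_{[a,b]} |φ' - P_k^R[φ]| ≤ C·(1/α)^k·sup_ℝ |φ^{(k+1)}|`. -/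
theorem statement8 (a b : ℝ) (hab : a < b) :
    ∀ k ∈ ({1, 2, 3} : Set ℕ), ∃ C > (0 : ℝ), ∀ α > (0 : ℝ), ∀ φ : ℝ → ℝ,
      Function.Periodic φ (b - a) → ContDiff ℝ (k + 1) φ →
      ∀ M : ℝ, (∀ x : ℝ, |iteratedDeriv (k + 1) φ x| ≤ M) →
      ∀ x ∈ Set.Icc a b, |deriv φ x - PR k α a b φ x| ≤ C * (1 / α) ^ k * M := by
  intro k hk
  refine ⟨2, by norm_num, fun α hα φ hper hφ M hM x hx => ?_⟩
  have hM0 : 0 ≤ M := (abs_nonneg _).trans (hM x)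
  have hf : ∀ j < k + 1, PerDeriv a b (iteratedDeriv j φ) (iteratedDeriv (j + 1) φ) :=
    fun j hj => perDeriv_iteratedDeriv hper (n := k + 1) (by exact_mod_cast hφ) hj
  have herr := error_identity hα hab (f := fun j => iteratedDeriv j φ) hf x k (by omega)
  simp only [iteratedDeriv_one, iteratedDeriv_zero] at herr
  have hcont : Continuous (iteratedDeriv (k + 1) φ) := (hf k (by omega)).cont
  have hb := fun p => SR_iterate_bound hα hab hcont (fun y _ => hM y) p
  by_cases h3 : k = 3
  · subst h3
    have hD := DR_iterate hα hab (f := fun j => iteratedDeriv j φ) hf 2 (by omega)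
    simp only [iteratedDeriv_zero] at hD
    have hp := fun j (hj : j < 3 + 1) => SR_iterate_perDeriv (α := α) hα hab (hf j hj) 2
    have hW := W0_deriv hα hab (hp 2 (by omega)) (hp 3 (by omega)) hx
    have hD0 : α * D0 α a b ((DR α a b)^[2] φ) x =
        -((1 / α) ^ 3 * W0 α a b ((SR α a b)^[2] (iteratedDeriv (3 + 1) φ)) x) := by
      rw [hD, D0_eq, W0_smul, hW]
      field_simp
      ring
    have e : deriv φ x - PR 3 α a b φ x = (1 / α) ^ 3 *
        ((SR α a b)^[3] (iteratedDeriv (3 + 1) φ) x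
          - W0 α a b ((SR α a b)^[2] (iteratedDeriv (3 + 1) φ)) x) := by
      rw [PR, if_pos rfl, hD0]
      linear_combination herr
    have b1 := (hb 3).2 x hx
    have b2 := W0_bound hα hab (hb 2).1 (hb 2).2 x hx
    have b3 := abs_sub ((SR α a b)^[3] (iteratedDeriv (3 + 1) φ) x)
      (W0 α a b ((SR α a b)^[2] (iteratedDeriv (3 + 1) φ)) x)
    rw [e, abs_mul, abs_of_pos (by positivity : (0 : ℝ) < (1 / α) ^ 3)]
    calc _ ≤ (1 / α) ^ 3 * (M + M) := by gcongr; linarith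
      _ = _ := by ring
  · rw [PR, if_neg h3, herr, abs_mul, abs_of_pos (by positivity : (0 : ℝ) < (1 / α) ^ k)]
    calc _ ≤ (1 / α) ^ k * M := by gcongr; exact (hb k).2 x hx
      _ ≤ _ := by
        have : 0 ≤ (1 / α) ^ k * M := by positivity
        linarith
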